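/- arXiv:1506.00179 — 3 statements merged into one kernel-verified Lean document; each statement's English description precedes it below -/
import Mathlib

section
/- Let c ∈ (1,∞) and let φ̂_0 ∈ C^∞(ℝ) be bounded with φ̂_0(ω) = 1 for |ω| ≤ 1 and φ̂_0(ω) = 0 for |ω| ≥ c. Then there is a constant C, depending only on φ̂_0, such that for all λ > λ' > c, the inverse Fourier transform h of ĥ(ω) := ĥ_0(ω) φ̂_0(ω/π) satisfies ‖h‖_{L¹} = ∫_{−∞}^{∞} |h(t)| dt ≤ C λ'. -/
noncomputable section
open MeasureTheory
open scoped Real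

/-- Inverse Fourier transform `(1/√(2π)) ∫ F(ω) e^{iωt} dω`. -/
def invFT (F : ℝ → ℂ) (t : ℝ) : ℂ :=
  (1 / Real.sqrt (2 * π) : ℝ) * ∫ ω : ℝ, F ω * Complex.exp (Complex.I * ω * t)

/-- `ĥ₀(ω) = λ sin(ω/(2λ)) / (λ' sin(ω/(2λ')))`, with `ĥ₀(0) = 1`. -/
def hhat0 (lam lam' ω : ℝ) : ℝ :=
  if ω = 0 then 1
  else (lam * Real.sin (ω / (2 * lam))) / (lam' * Real.sin (ω / (2 * lam')))

/-!
Two integrations by parts give `‖invFT F‖₁ ≤ √(π / 2) * (‖F‖₁ + ‖F''‖₁)`. The multiplier is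
`sinc (a * ω) / sinc (b * ω) * φ0 (ω / π)` with `a = 1 / (2λ)` and `b = 1 / (2λ')`. Both parameters
range over the compact interval `[0, 1 / (2c)]`, so `|b * ω| ≤ π / 2` on the support of the cutoff
and the denominator does not vanish there. Replacing `1 / sinc` by a globally `C²` function that
agrees with it on `[-π / 2, π / 2]` makes the multiplier jointly `C²` in `(a, b, ω)`. The norms on
the right are then continuous in `(a, b)`, hence bounded.
-/

open Function Set
open scoped FourierTransform

section InverseFourierTransform

lemma invFT_eq_fourier (F : ℝ → ℂ) (t : ℝ) :
    invFT F t = ((√(2 * π))⁻¹ : ℝ) * 𝓕 F (-(t / (2 * π))) := by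
  rw [invFT, one_div, Real.fourier_real_eq_integral_exp_smul]
  congr 2 with ω
  rw [smul_eq_mul, mul_comm]
  congr 2
  push_cast
  field_simp

lemma continuous_invFT {F : ℝ → ℂ} (hF : Integrable F) : Continuous (invFT F) := by
  have hFourier : Continuous (𝓕 F) :=
    VectorFourier.fourierIntegral_continuous Real.continuous_fourierChar (by fun_prop) hF
  simp_rw [funext (invFT_eq_fourier F)]
  fun_prop

variable {E : Type*} [NormedAddCommGroup E] [NormedSpace ℂ E]

lemma norm_fourier_le_mul_inv_one_add_sq {f : ℝ → E} (hf : ContDiff ℝ 2 f)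
    (hint : ∀ k ≤ 2, Integrable (iteratedDeriv k f)) (ξ : ℝ) :
    ‖𝓕 f ξ‖ ≤ ((∫ x, ‖f x‖) + ∫ x, ‖iteratedDeriv 2 f x‖) * (1 + (2 * π * ξ) ^ 2)⁻¹ := by
  have hle (g : ℝ → E) : ‖𝓕 g ξ‖ ≤ ∫ x, ‖g x‖ :=
    VectorFourier.norm_fourierIntegral_le_integral_norm _ _ _ g ξ
  have hderiv : ‖𝓕 (iteratedDeriv 2 f) ξ‖ = (2 * π * ξ) ^ 2 * ‖𝓕 f ξ‖ := by
    rw [Real.fourier_iteratedDeriv (N := 2) hf (mod_cast hint) le_rfl, norm_smul]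
    simp [mul_pow, abs_of_pos Real.pi_pos]
  rw [← div_eq_mul_inv, le_div_iff₀ (by positivity)]
  linarith [hle f, hle (iteratedDeriv 2 f)]

variable {F : ℝ → ℂ} (hF : ContDiff ℝ 2 F) (hint : ∀ k ≤ 2, Integrable (iteratedDeriv k F))

include hF hint

lemma norm_invFT_le (t : ℝ) :
    ‖invFT F t‖ ≤
      (√(2 * π))⁻¹ * ((∫ ω, ‖F ω‖) + ∫ ω, ‖iteratedDeriv 2 F ω‖) * (1 + t ^ 2)⁻¹ := by
  have hscale : 2 * π * -(t / (2 * π)) = -t := by field_simp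
  have h := norm_fourier_le_mul_inv_one_add_sq hF hint (-(t / (2 * π)))
  rw [hscale, neg_sq] at h
  rw [invFT_eq_fourier, norm_mul, Complex.norm_of_nonneg (by positivity), mul_assoc]
  gcongr

lemma integrable_invFT : Integrable (invFT F) :=
  (integrable_inv_one_add_sq.const_mul _).mono'
    (continuous_invFT (by simpa using hint 0 zero_le_two)).aestronglyMeasurable
    (.of_forall (norm_invFT_le hF hint))

lemma integral_norm_invFT_le :
    ∫ t, ‖invFT F t‖ ≤
      (√(2 * π))⁻¹ * ((∫ ω, ‖F ω‖) + ∫ ω, ‖iteratedDeriv 2 F ω‖) * π := by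
  calc
    ∫ t, ‖invFT F t‖ ≤ ∫ t, (√(2 * π))⁻¹ *
        ((∫ ω, ‖F ω‖) + ∫ ω, ‖iteratedDeriv 2 F ω‖) * (1 + t ^ 2)⁻¹ :=
      integral_mono (integrable_invFT hF hint).norm (integrable_inv_one_add_sq.const_mul _)
        (norm_invFT_le hF hint)
    _ = _ := by rw [integral_const_mul, integral_univ_inv_one_add_sq]

end InverseFourierTransform

section IteratedDeriv

variable {𝕜 E : Type*} [NontriviallyNormedField 𝕜] [NormedAddCommGroup E] [NormedSpace 𝕜 E]

lemma contDiff_uncurry_iteratedDeriv {P : Type*} [NormedAddCommGroup P] [NormedSpace 𝕜 P]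
    {G : P → 𝕜 → E} {n : WithTop ℕ∞} (k : ℕ) (hG : ContDiff 𝕜 (n + k) ↿G) :
    ContDiff 𝕜 n ↿(fun p ↦ iteratedDeriv k (G p)) := by
  induction k generalizing n with
  | zero => simpa using hG
  | succ k ih =>
    have hk : ContDiff 𝕜 (n + 1) ↿(fun p ↦ iteratedDeriv k (G p)) :=
      ih (by simpa [add_assoc, add_comm (k : WithTop ℕ∞)] using hG)
    have hfderiv : ContDiff 𝕜 n fun q : P × 𝕜 ↦ fderiv 𝕜 (iteratedDeriv k (G q.1)) q.2 :=
      ContDiff.fderiv_succ (f := fun q : P × 𝕜 ↦ iteratedDeriv k (G q.1))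
        (hk.comp (contDiff_fst.fst.prodMk contDiff_snd)) contDiff_snd
    simpa only [iteratedDeriv_succ, ← fderiv_apply_one_eq_deriv] using!
      hfderiv.clm_apply contDiff_const

lemma tsupport_iteratedDeriv_subset (f : 𝕜 → E) (k : ℕ) :
    tsupport (iteratedDeriv k f) ⊆ tsupport f := by
  induction k with
  | zero => rw [iteratedDeriv_zero]
  | succ k ih => exact iteratedDeriv_succ (f := f) ▸ tsupport_deriv_subset.trans ih

end IteratedDeriv

theorem exists_forall_integral_norm_invFT_le {P : Type*} [NormedAddCommGroup P] [NormedSpace ℝ P]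
    {G : P → ℝ → ℂ} (hG : ContDiff ℝ 2 ↿G) {K : Set P} (hK : IsCompact K) {s : Set ℝ}
    (hs : IsCompact s) (hGs : ∀ p ∈ K, ∀ ω ∉ s, G p ω = 0) :
    ∃ C, ∀ p ∈ K, Integrable (invFT (G p)) ∧ ∫ t, ‖invFT (G p) t‖ ≤ C := by
  have hcont : ∀ k ≤ 2, Continuous ↿(fun p ↦ iteratedDeriv k (G p)) := fun k hk ↦
    (contDiff_uncurry_iteratedDeriv (n := 0) k (hG.of_le (by simpa using mod_cast hk))).continuous
  have hzero : ∀ k, ∀ p ∈ K, ∀ ω ∉ s, iteratedDeriv k (G p) ω = 0 := fun k p hp ω hω ↦ by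
    have hsupp : tsupport (G p) ⊆ s := closure_minimal
      (fun ω hne ↦ by_contra fun hω ↦ hne (hGs p hp ω hω)) hs.isClosed
    exact image_eq_zero_of_notMem_tsupport fun h ↦ hω (hsupp (tsupport_iteratedDeriv_subset _ _ h))
  have hL1 : ∀ k ≤ 2, ContinuousOn (fun p ↦ ∫ ω, ‖iteratedDeriv k (G p) ω‖) K := fun k hk ↦
    continuousOn_integral_of_compact_support hs (hcont k hk).norm.continuousOn
      fun p ω hp hω ↦ by rw [hzero k p hp ω hω, norm_zero]
  obtain ⟨C, hC⟩ := hK.bddAbove_image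
    (((hL1 0 zero_le_two).add (hL1 2 le_rfl)).const_mul (√(2 * π))⁻¹ |>.mul_const π)
  refine ⟨C, fun p hp ↦ ?_⟩
  have hGp : ContDiff ℝ 2 (G p) := hG.comp (contDiff_const.prodMk contDiff_id)
  have hint : ∀ k ≤ 2, Integrable (iteratedDeriv k (G p)) := fun k hk ↦
    ((hcont k hk).comp (Continuous.prodMk_right p)).integrable_of_hasCompactSupport
      (.intro hs fun _ hω ↦ hzero k p hp _ hω)
  exact ⟨integrable_invFT hGp hint,
    (integral_norm_invFT_le hGp hint).trans (by simpa using hC (mem_image_of_mem _ hp))⟩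

lemma exists_contDiff_eqOn_inv {E : Type*} [NormedAddCommGroup E] [NormedSpace ℝ E]
    [FiniteDimensional ℝ E] {n : ℕ∞} {f : E → ℝ} (hf : ContDiff ℝ n f) {s : Set E}
    (hs : IsClosed s) (hfs : ∀ x ∈ s, f x ≠ 0) :
    ∃ g : E → ℝ, ContDiff ℝ n g ∧ EqOn g f⁻¹ s := by
  obtain ⟨ψ, hψ_supp, hψ, hψ_range⟩ := hs.isOpen_compl.exists_contDiff_support_eq (n := n)
  have hψ_nonneg : ∀ x, 0 ≤ ψ x := fun x ↦ (hψ_range (mem_range_self x)).1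
  have hψ_zero : ∀ x, ψ x = 0 ↔ x ∈ s := fun x ↦ by
    rw [← notMem_support, hψ_supp, notMem_compl_iff]
  have hne : ∀ x, f x ^ 2 + ψ x ≠ 0 := fun x h ↦ by
    obtain ⟨hfx, hψx⟩ := (add_eq_zero_iff_of_nonneg (sq_nonneg _) (hψ_nonneg x)).1 h
    exact hfs x ((hψ_zero x).1 hψx) (pow_eq_zero_iff two_ne_zero |>.1 hfx)
  refine ⟨fun x ↦ f x / (f x ^ 2 + ψ x), hf.div ((hf.pow 2).add hψ) hne, fun x hx ↦ ?_⟩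
  simp [(hψ_zero x).2 hx, sq, div_self_mul_self']

section Sinc

open Real (sinc)

lemma contDiff_sinc {n : WithTop ℕ∞} : ContDiff ℝ n sinc := by
  refine contDiff_iff_contDiffAt.2 fun x ↦ ?_
  obtain rfl | hx := eq_or_ne x 0
  · obtain ⟨p, hp⟩ := Real.analyticAt_sin (x := 0)
    rw [Real.sinc_eq_dslope]
    exact AnalyticAt.contDiffAt ⟨_, hp.has_fpower_series_dslope_fslope⟩
  · refine (Real.contDiff_sin.contDiffAt.div contDiffAt_id hx).congr_of_eventuallyEq ?_
    filter_upwards [isOpen_ne.mem_nhds hx] with y hy using Real.sinc_of_ne_zero hy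

lemma sinc_pos_of_abs_lt_pi {x : ℝ} (hx : |x| < π) : 0 < sinc x := by
  wlog hpos : 0 < x generalizing x
  · obtain rfl | hneg := (not_lt.1 hpos).eq_or_lt
    · simp
    · exact Real.sinc_neg x ▸ this (by rwa [abs_neg]) (neg_pos.2 hneg)
  rw [Real.sinc_of_ne_zero hpos.ne']
  exact div_pos (Real.sin_pos_of_pos_of_lt_pi hpos (lt_of_abs_lt hx)) hpos

theorem exists_forall_integral_norm_invFT_sinc_div_sinc_mul_le {φ : ℝ → ℝ} (hφ : ContDiff ℝ 2 φ)
    {A B R : ℝ} (hφ_zero : ∀ ω, R ≤ |ω| → φ ω = 0) (hBR : B * R < π) :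
    ∃ C, ∀ a b, |a| ≤ A → |b| ≤ B →
      Integrable (invFT fun ω ↦ ((sinc (a * ω) / sinc (b * ω) * φ ω : ℝ) : ℂ)) ∧
        ∫ t, ‖invFT (fun ω ↦ ((sinc (a * ω) / sinc (b * ω) * φ ω : ℝ) : ℂ)) t‖ ≤ C := by
  obtain ⟨g, hg, hg_inv⟩ : ∃ g : ℝ → ℝ, ContDiff ℝ (2 : ℕ∞) g ∧
      EqOn g sinc⁻¹ (Metric.closedBall 0 (B * R)) :=
    exists_contDiff_eqOn_inv contDiff_sinc Metric.isClosed_closedBall fun x hx ↦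
      (sinc_pos_of_abs_lt_pi ((mem_closedBall_zero_iff.1 hx).trans_lt hBR)).ne'
  let G : ℝ × ℝ → ℝ → ℂ := fun p ω ↦ ((sinc (p.1 * ω) * g (p.2 * ω) * φ ω : ℝ) : ℂ)
  have hG : ContDiff ℝ 2 ↿G := Complex.ofRealCLM.contDiff.comp <|
    ((contDiff_sinc.comp (by fun_prop)).mul (hg.comp (by fun_prop))).mul (hφ.comp contDiff_snd)
  have hG_zero (p : ℝ × ℝ) (ω : ℝ) (hω : ω ∉ Metric.closedBall 0 R) : G p ω = 0 := by
    rw [mem_closedBall_zero_iff, not_le] at hω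
    simp [G, hφ_zero ω hω.le]
  have hG_eq (a b : ℝ) (hb : |b| ≤ B) :
      (fun ω ↦ ((sinc (a * ω) / sinc (b * ω) * φ ω : ℝ) : ℂ)) = G (a, b) := by
    ext ω
    rcases le_or_gt R |ω| with hω | hω
    · simp [G, hφ_zero ω hω]
    · have hbω : b * ω ∈ Metric.closedBall 0 (B * R) := by
        rw [mem_closedBall_zero_iff, norm_mul]
        exact mul_le_mul hb hω.le (abs_nonneg ω) ((abs_nonneg b).trans hb)
      simp [G, hg_inv hbω, div_eq_mul_inv]
  obtain ⟨C, hC⟩ := exists_forall_integral_norm_invFT_le hG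
    ((isCompact_closedBall 0 A).prod (isCompact_closedBall 0 B)) (isCompact_closedBall 0 R)
    fun p _ ↦ hG_zero p
  refine ⟨C, fun a b ha hb ↦ ?_⟩
  rw [hG_eq a b hb]
  exact hC (a, b) ⟨mem_closedBall_zero_iff.2 ha, mem_closedBall_zero_iff.2 hb⟩

lemma hhat0_eq_sinc_div_sinc {lam lam' : ℝ} (hlam : lam ≠ 0) (hlam' : lam' ≠ 0) (ω : ℝ) :
    hhat0 lam lam' ω = sinc ((2 * lam)⁻¹ * ω) / sinc ((2 * lam')⁻¹ * ω) := by
  rw [hhat0, inv_mul_eq_div, inv_mul_eq_div]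
  split_ifs with hω
  · simp [hω]
  · rw [Real.sinc_of_ne_zero (by positivity), Real.sinc_of_ne_zero (by positivity)]
    field_simp

end Sinc

theorem kernel_L1_bound_general {c : ℝ} (hc : 0 < c) {φ0 : ℝ → ℝ} (hφ0 : ContDiff ℝ 2 φ0)
    (hφ0_zero : ∀ ω : ℝ, c ≤ |ω| → φ0 ω = 0) :
    ∃ C : ℝ, ∀ lam lam' : ℝ, c ≤ lam → c ≤ lam' →
      Integrable (invFT fun ω : ℝ ↦ ((hhat0 lam lam' ω * φ0 (ω / π) : ℝ) : ℂ)) ∧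
      (∫ t : ℝ, ‖invFT (fun ω : ℝ ↦ ((hhat0 lam lam' ω * φ0 (ω / π) : ℝ) : ℂ)) t‖) ≤ C := by
  have hφ0_scaled_zero (ω : ℝ) (hω : π * c ≤ |ω|) : φ0 (ω / π) = 0 := hφ0_zero _ <| by
    rwa [abs_div, abs_of_pos Real.pi_pos, le_div_iff₀' Real.pi_pos]
  have hhalf : (2 * c)⁻¹ * (π * c) < π := by
    rw [show (2 * c)⁻¹ * (π * c) = π / 2 by field_simp]
    exact half_lt_self Real.pi_pos
  have habs {l : ℝ} (hl : c ≤ l) : |(2 * l)⁻¹| ≤ (2 * c)⁻¹ := by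
    rw [abs_of_pos (by have := hc.trans_le hl; positivity)]
    gcongr
  obtain ⟨C, hC⟩ := exists_forall_integral_norm_invFT_sinc_div_sinc_mul_le
    (hφ0.comp (contDiff_id.div_const π)) hφ0_scaled_zero hhalf
  refine ⟨C, fun lam lam' hlam hlam' ↦ ?_⟩
  simp_rw [hhat0_eq_sinc_div_sinc (hc.trans_le hlam).ne' (hc.trans_le hlam').ne']
  exact hC _ _ (habs hlam) (habs hlam')

/-- for a smooth bounded cutoff `φ̂₀` equal to `1` on `[-1,1]` and `0` off
`(-c, c)`, there is a constant `C = C(φ̂₀)` so that for all `λ > λ' > c` the inverse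
Fourier transform `h` of `ĥ(ω) = ĥ₀(ω) φ̂₀(ω/π)` satisfies `‖h‖_{L¹} ≤ C λ'`. -/
theorem kernel_L1_bound (c : ℝ) (hc : 1 < c)
    (φ0 : ℝ → ℝ) (hφ0_smooth : ContDiff ℝ (⊤ : ℕ∞) φ0)
    (hφ0_bdd : ∃ M : ℝ, ∀ ω : ℝ, |φ0 ω| ≤ M)
    (hφ0_one : ∀ ω : ℝ, |ω| ≤ 1 → φ0 ω = 1)
    (hφ0_zero : ∀ ω : ℝ, c ≤ |ω| → φ0 ω = 0) :
    ∃ C : ℝ, ∀ lam lam' : ℝ, c < lam' → lam' < lam →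
      (∫ t : ℝ, ‖invFT (fun ω : ℝ => ((hhat0 lam lam' ω * φ0 (ω / π) : ℝ) : ℂ)) t‖)
        ≤ C * lam' := by
  obtain ⟨C, hC⟩ :=
    kernel_L1_bound_general (zero_lt_one.trans hc) (contDiff_infty.1 hφ0_smooth 2) hφ0_zero
  refine ⟨C, fun lam lam' hlam' hlam ↦ ?_⟩
  have hle := (hC lam lam' (hlam'.trans hlam).le hlam'.le).2
  exact hle.trans <|
    le_mul_of_one_le_right ((integral_nonneg fun _ ↦ norm_nonneg _).trans hle) (hc.trans hlam').le
end
end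

section
/- Let ρ ≥ 1 and r ≥ 1 be integers. For every sequence (h_n)_{n∈ℤ} of real numbers, (S^r_ρ (Δ^r h))_n = (1/(2ρ+1))^r (Δ_ρ^r h)_n for all n ∈ ℤ. In particular, for r = 1, (S^1_ρ (Δ h))_n = (1/(2ρ+1)) (h_{n+ρ} − h_{n−ρ−1}). -/
noncomputable section
open Finset
open scoped BigOperators

/-- Partial-sum operator: `(S⁰_ρ h)_n = h_n`,
`(S^r_ρ h)_n = (1/(2ρ+1)) ∑_{m=-ρ}^{ρ} (S^{r-1}_ρ h)_{n-m}`. -/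
def Spow (ρ : ℕ) : ℕ → (ℤ → ℝ) → ℤ → ℝ
  | 0 => fun h => h
  | r + 1 => fun h n =>
      (1 / (2 * (ρ : ℝ) + 1)) * ∑ m ∈ Finset.Icc (-(ρ : ℤ)) (ρ : ℤ), Spow ρ r h (n - m)

/-- Backward difference `(Δ h)_n = h_n - h_{n-1}`. -/
def Del (h : ℤ → ℝ) : ℤ → ℝ := fun n => h n - h (n - 1)

/-- `(Δ_p x)_n = x_{n+p} - x_{n-p-1}`. -/
def DelP (p : ℕ) (x : ℤ → ℝ) : ℤ → ℝ := fun n => x (n + (p : ℤ)) - x (n - (p : ℤ) - 1)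

/-! A single averaging step telescopes on a backward difference: `S¹_ρ ∘ Δ = (1/(2ρ+1)) Δ_ρ`. As
`Δ_ρ` commutes with `Δ`, the composite `S^r_ρ ∘ Δ^r` collapses one pair `S¹_ρ ∘ Δ` at a time. -/

theorem sum_Icc_neg_sub_add_one {M : Type*} [AddCommGroup M] (f : ℤ → M) (N : ℕ) :
    ∑ m ∈ Icc (-(N : ℤ)) N, (f m - f (m + 1)) = f (-N) - f (N + 1) := by
  rw [sum_Icc_eq_sum_Ico_add _ (by lia), sum_Ico_int_sub, sub_add_sub_cancel]

theorem sum_Icc_Del_sub (ρ : ℕ) (h : ℤ → ℝ) (n : ℤ) :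
    ∑ m ∈ Icc (-(ρ : ℤ)) ρ, Del h (n - m) = DelP ρ h n := by
  simpa only [Del, DelP, sub_neg_eq_add, sub_add_eq_sub_sub] using
    sum_Icc_neg_sub_add_one (fun m => h (n - m)) ρ

theorem commute_DelP_Del (p : ℕ) : Function.Commute (DelP p) Del := by
  intro h
  funext n
  simp only [Del, DelP, sub_add_eq_add_sub, sub_right_comm n 1 (p : ℤ)]
  exact sub_sub_sub_comm _ _ _ _

theorem Spow_iterate_Del (ρ r : ℕ) (h : ℤ → ℝ) (n : ℤ) :
    Spow ρ r (Del^[r] h) n = (1 / (2 * (ρ : ℝ) + 1)) ^ r * (DelP ρ)^[r] h n := by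
  induction r generalizing h n with
  | zero => simp [Spow]
  | succ r ih =>
    set c : ℝ := 1 / (2 * (ρ : ℝ) + 1)
    have commute_iterate : (DelP ρ)^[r] (Del h) = Del ((DelP ρ)^[r] h) :=
      (commute_DelP_Del ρ).iterate_left r h
    calc Spow ρ (r + 1) (Del^[r + 1] h) n
        = c * ∑ m ∈ Icc (-(ρ : ℤ)) ρ, Spow ρ r (Del^[r] (Del h)) (n - m) := rfl
      _ = c * (c ^ r * ∑ m ∈ Icc (-(ρ : ℤ)) ρ, Del ((DelP ρ)^[r] h) (n - m)) := by
        simp only [ih, commute_iterate, mul_sum]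
      _ = c ^ (r + 1) * DelP ρ ((DelP ρ)^[r] h) n := by
        rw [sum_Icc_Del_sub, pow_succ', mul_assoc]
      _ = c ^ (r + 1) * (DelP ρ)^[r + 1] h n := by
        rw [Function.iterate_succ_apply']

/-- `S^r_ρ ∘ Δ^r = (1/(2ρ+1))^r Δ_ρ^r`; in particular for `r = 1`,
`(S^1_ρ (Δ h))_n = (1/(2ρ+1)) (h_{n+ρ} - h_{n-ρ-1})`. -/
theorem partial_sum_of_difference (ρ r : ℕ) (hρ : 1 ≤ ρ) (hr : 1 ≤ r) (h : ℤ → ℝ) :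
    (∀ n : ℤ, Spow ρ r (Del^[r] h) n = (1 / (2 * (ρ : ℝ) + 1)) ^ r * (DelP ρ)^[r] h n) ∧
    (∀ n : ℤ, Spow ρ 1 (Del h) n
        = (1 / (2 * (ρ : ℝ) + 1)) * (h (n + (ρ : ℤ)) - h (n - (ρ : ℤ) - 1))) := by
  refine ⟨Spow_iterate_Del ρ r h, fun n => ?_⟩
  simpa only [Function.iterate_one, pow_one, DelP] using Spow_iterate_Del ρ 1 h n
end
end

section
/- Let λ' > 0 and let ĥ : [−λ'π, λ'π] → ℂ be twice continuously differentiable with ĥ(λ'π) = ĥ(−λ'π) = 0. Let C_{ĥ'} ≥ sup_{|ω| ≤ λ'π} |ĥ'(ω)| and C_{ĥ''} ≥ sup_{|ω| ≤ λ'π} |ĥ''(ω)|. Then (1/√(2π)) ∫_{−∞}^{∞} (1/(t²+1)) |∫_{−λ'π}^{λ'π} t² ĥ(ω) e^{iωt} dω| dt ≤ √(2π) (λ'π C_{ĥ''} + C_{ĥ'}). -/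
noncomputable section
open MeasureTheory
open scoped Real

/-!
Since `t² e^{iωt} = -∂²/∂ω² e^{iωt}`, integrating by parts twice moves the factor `t²` from the
exponential onto `ĥ`. Only the boundary terms containing `ĥ'` survive, so the oscillatory integral
is at most `2 C_{ĥ'} + 2λ'π C_{ĥ''}` uniformly in `t`; the weight `1/(t²+1)` has total mass `π`.
-/

lemma aestronglyMeasurable_of_hasDerivAt {𝕜 F : Type*} [NontriviallyNormedField 𝕜]
    [LocallyCompactSpace 𝕜] [MeasurableSpace 𝕜] [OpensMeasurableSpace 𝕜] [NormedAddCommGroup F]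
    [NormedSpace 𝕜 F] [CompleteSpace F] [SecondCountableTopologyEither 𝕜 F] {μ : Measure 𝕜}
    {s : Set 𝕜} (hs : MeasurableSet s) {f f' : 𝕜 → F} (hf : ∀ x ∈ s, HasDerivAt f (f' x) x) :
    AEStronglyMeasurable f' (μ.restrict s) :=
  (aestronglyMeasurable_deriv f _).congr <|
    (ae_restrict_mem hs).mono fun x hx ↦ (hf x hx).deriv

lemma intervalIntegrable_of_hasDerivAt_of_norm_le {E : Type*} [NormedAddCommGroup E]
    [NormedSpace ℝ E] [CompleteSpace E] {f f' : ℝ → E} {a b C : ℝ}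
    (hf : ∀ x ∈ Set.uIoo a b, HasDerivAt f (f' x) x) (hC : ∀ x ∈ Set.uIoo a b, ‖f' x‖ ≤ C) :
    IntervalIntegrable f' volume a b := by
  rw [intervalIntegrable_iff, Set.uIoc, integrableOn_Ioc_iff_integrableOn_Ioo]
  exact .of_bound measure_Ioo_lt_top (aestronglyMeasurable_of_hasDerivAt measurableSet_Ioo hf) C <|
    (ae_restrict_mem measurableSet_Ioo).mono hC

lemma integral_smul_deriv_deriv_eq_deriv_deriv_smul {𝕜 E : Type*} [NontriviallyNormedField 𝕜]
    [NormedAlgebra ℝ 𝕜] [NormedAddCommGroup E] [NormedSpace 𝕜 E] [NormedSpace ℝ E]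
    [IsScalarTower ℝ 𝕜 E] [CompleteSpace E] {a b : ℝ} {u u' u'' : ℝ → 𝕜} {v v' v'' : ℝ → E}
    (hu : ∀ x ∈ Set.uIcc a b, HasDerivWithinAt u (u' x) (Set.uIcc a b) x)
    (hu' : ∀ x ∈ Set.uIcc a b, HasDerivWithinAt u' (u'' x) (Set.uIcc a b) x)
    (hv : ∀ x ∈ Set.uIcc a b, HasDerivWithinAt v (v' x) (Set.uIcc a b) x)
    (hv' : ∀ x ∈ Set.uIcc a b, HasDerivWithinAt v' (v'' x) (Set.uIcc a b) x)
    (hu'' : IntervalIntegrable u'' volume a b) (hv'' : IntervalIntegrable v'' volume a b) :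
    ∫ x in a..b, u x • v'' x =
      (u b • v' b - u a • v' a) - (u' b • v b - u' a • v a) + ∫ x in a..b, u'' x • v x := by
  have hu'_int : IntervalIntegrable u' volume a b :=
    ContinuousOn.intervalIntegrable fun x hx ↦ (hu' x hx).continuousWithinAt
  have hv'_int : IntervalIntegrable v' volume a b :=
    ContinuousOn.intervalIntegrable fun x hx ↦ (hv' x hx).continuousWithinAt
  rw [intervalIntegral.integral_smul_deriv_eq_deriv_smul_of_hasDerivWithinAt hu hv' hu'_int hv'',
    intervalIntegral.integral_smul_deriv_eq_deriv_smul_of_hasDerivWithinAt hu' hv hu'' hv'_int]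
  abel

section Oscillatory

open Complex

lemma hasDerivAt_cexp_I_mul_ofReal_mul (z : ℂ) (x : ℝ) :
    HasDerivAt (fun ω : ℝ ↦ cexp (I * ω * z)) (I * z * cexp (I * x * z)) x := by
  have hlin : HasDerivAt (fun ω : ℝ ↦ I * ω * z) (I * z) x := by
    simpa only [id, ofReal_one, mul_one] using
      ((hasDerivAt_id x).ofReal_comp.const_mul I).mul_const z
  exact hlin.cexp.congr_deriv (mul_comm _ _)

lemma norm_cexp_I_mul_ofReal_mul_ofReal (x t : ℝ) : ‖cexp (I * x * t)‖ = 1 := by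
  rw [mul_assoc, mul_comm, ← ofReal_mul, norm_exp_ofReal_mul_I]

variable {E : Type*} [NormedAddCommGroup E] [NormedSpace ℂ E] [CompleteSpace E] {a b : ℝ}
  {f f' f'' : ℝ → E}

lemma integral_sq_mul_cexp_smul_eq
    (hf : ∀ x ∈ Set.uIcc a b, HasDerivWithinAt f (f' x) (Set.uIcc a b) x)
    (hf' : ∀ x ∈ Set.uIcc a b, HasDerivWithinAt f' (f'' x) (Set.uIcc a b) x)
    (hf'' : IntervalIntegrable f'' volume a b) (ha : f a = 0) (hb : f b = 0) (z : ℂ) :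
    ∫ ω in a..b, (z ^ 2 * cexp (I * ω * z)) • f ω =
      cexp (I * b * z) • f' b - cexp (I * a * z) • f' a -
        ∫ ω in a..b, cexp (I * ω * z) • f'' ω := by
  have hexp (x : ℝ) := hasDerivAt_cexp_I_mul_ofReal_mul z x
  have hexp' (x : ℝ) : HasDerivAt (fun ω : ℝ ↦ I * z * cexp (I * ω * z))
      (-(z ^ 2 * cexp (I * x * z))) x :=
    ((hexp x).const_mul (I * z)).congr_deriv <| by
      linear_combination z ^ 2 * cexp (I * x * z) * I_sq
  have hexp''_int : IntervalIntegrable (fun ω : ℝ ↦ -(z ^ 2 * cexp (I * ω * z))) volume a b :=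
    Continuous.intervalIntegrable (by fun_prop) a b
  rw [integral_smul_deriv_deriv_eq_deriv_deriv_smul (fun x _ ↦ (hexp x).hasDerivWithinAt)
    (fun x _ ↦ (hexp' x).hasDerivWithinAt) hf hf' hexp''_int hf'']
  simp only [ha, hb, smul_zero, sub_zero, neg_smul, intervalIntegral.integral_neg]
  abel

lemma norm_integral_sq_mul_cexp_smul_le {C : ℝ}
    (hf : ∀ x ∈ Set.uIcc a b, HasDerivWithinAt f (f' x) (Set.uIcc a b) x)
    (hf' : ∀ x ∈ Set.uIcc a b, HasDerivWithinAt f' (f'' x) (Set.uIcc a b) x)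
    (ha : f a = 0) (hb : f b = 0) (hC : ∀ x ∈ Set.uIcc a b, ‖f'' x‖ ≤ C) (t : ℝ) :
    ‖∫ ω in a..b, ((t : ℂ) ^ 2 * cexp (I * ω * t)) • f ω‖ ≤
      ‖f' b‖ + ‖f' a‖ + C * |b - a| := by
  have hf''_int : IntervalIntegrable f'' volume a b :=
    intervalIntegrable_of_hasDerivAt_of_norm_le
      (fun x hx ↦ (hf' x (Set.uIoo_subset_uIcc_self hx)).hasDerivAt (Icc_mem_nhds hx.1 hx.2))
      (fun x hx ↦ hC x (Set.uIoo_subset_uIcc_self hx))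
  have norm_cexp_smul (x : ℝ) (v : E) : ‖cexp (I * x * t) • v‖ = ‖v‖ := by
    rw [norm_smul, norm_cexp_I_mul_ofReal_mul_ofReal, one_mul]
  have hint : ‖∫ ω in a..b, cexp (I * ω * t) • f'' ω‖ ≤ C * |b - a| :=
    intervalIntegral.norm_integral_le_of_norm_le_const fun x hx ↦
      (norm_cexp_smul x _).trans_le (hC x (Set.uIoc_subset_uIcc hx))
  rw [integral_sq_mul_cexp_smul_eq hf hf' hf''_int ha hb]
  calc _ ≤ ‖cexp (I * b * t) • f' b‖ + ‖cexp (I * a * t) • f' a‖ +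
        ‖∫ ω in a..b, cexp (I * ω * t) • f'' ω‖ :=
          (norm_sub_le _ _).trans (by gcongr; exact norm_sub_le _ _)
    _ ≤ ‖f' b‖ + ‖f' a‖ + C * |b - a| := by
          rw [norm_cexp_smul, norm_cexp_smul]; gcongr

end Oscillatory

lemma integral_mul_le_integral_mul_of_le {α : Type*} [MeasurableSpace α] {μ : Measure α}
    {w g : α → ℝ} {K : ℝ} (hw : Integrable w μ) (hw0 : 0 ≤ w) (hg0 : 0 ≤ g) (hg : ∀ x, g x ≤ K) :
    ∫ x, w x * g x ∂μ ≤ (∫ x, w x ∂μ) * K :=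
  calc ∫ x, w x * g x ∂μ ≤ ∫ x, w x * K ∂μ :=
        integral_mono_of_nonneg (.of_forall fun x ↦ mul_nonneg (hw0 x) (hg0 x)) (hw.mul_const K)
          (.of_forall fun x ↦ mul_le_mul_of_nonneg_left (hg x) (hw0 x))
    _ = (∫ x, w x ∂μ) * K := integral_mul_const K w

lemma integral_one_div_sq_add_one_mul_le {g : ℝ → ℝ} {K : ℝ} (hg0 : 0 ≤ g) (hg : ∀ t, g t ≤ K) :
    ∫ t : ℝ, 1 / (t ^ 2 + 1) * g t ≤ π * K := by
  simp_rw [one_div, add_comm _ (1 : ℝ)]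
  rw [← integral_univ_inv_one_add_sq]
  exact integral_mul_le_integral_mul_of_le integrable_inv_one_add_sq (fun t ↦ by positivity) hg0 hg

theorem weighted_integral_bound_high_general {E : Type*} [NormedAddCommGroup E] [NormedSpace ℂ E]
    [CompleteSpace E] {a b : ℝ} (hab : a ≤ b) {H H' H'' : ℝ → E}
    (hd1 : ∀ ω ∈ Set.Icc a b, HasDerivWithinAt H (H' ω) (Set.Icc a b) ω)
    (hd2 : ∀ ω ∈ Set.Icc a b, HasDerivWithinAt H' (H'' ω) (Set.Icc a b) ω)
    (ha : H a = 0) (hb : H b = 0) {C1 C2 : ℝ} (ha1 : ‖H' a‖ ≤ C1) (hb1 : ‖H' b‖ ≤ C1)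
    (hC2 : ∀ ω ∈ Set.Icc a b, ‖H'' ω‖ ≤ C2) :
    (1 / √(2 * π)) * ∫ t : ℝ, (1 / (t ^ 2 + 1)) *
        ‖∫ ω in a..b, ((t : ℂ) ^ 2 * Complex.exp (Complex.I * ω * t)) • H ω‖
      ≤ √(2 * π) * ((b - a) / 2 * C2 + C1) := by
  rw [← Set.uIcc_of_le hab] at hd1 hd2 hC2
  have hosc (t : ℝ) : ‖∫ ω in a..b, ((t : ℂ) ^ 2 * Complex.exp (Complex.I * ω * t)) • H ω‖ ≤
      2 * ((b - a) / 2 * C2 + C1) := by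
    have h := norm_integral_sq_mul_cexp_smul_le hd1 hd2 ha hb hC2 t
    rw [abs_of_nonneg (sub_nonneg.2 hab)] at h
    linarith
  rw [one_div_mul_eq_div, div_le_iff₀' (by positivity), ← mul_assoc,
    Real.mul_self_sqrt (by positivity), mul_comm 2 π, mul_assoc]
  exact integral_one_div_sq_add_one_mul_le (fun _ ↦ norm_nonneg _) hosc

/-- if `ĥ` is twice continuously differentiable on `[-λ'π, λ'π]` and
vanishes at the endpoints, with `|ĥ'| ≤ C_{ĥ'}` and `|ĥ''| ≤ C_{ĥ''}` on that interval,
then `(1/√(2π)) ∫_ℝ (1/(t²+1)) |∫_{-λ'π}^{λ'π} t² ĥ(ω) e^{iωt} dω| dt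
  ≤ √(2π) (λ'π C_{ĥ''} + C_{ĥ'})`. -/
theorem weighted_integral_bound_high (lam' : ℝ) (hlam' : 0 < lam')
    (H H' H'' : ℝ → ℂ)
    (hd1 : ∀ ω ∈ Set.Icc (-(lam' * π)) (lam' * π),
      HasDerivWithinAt H (H' ω) (Set.Icc (-(lam' * π)) (lam' * π)) ω)
    (hd2 : ∀ ω ∈ Set.Icc (-(lam' * π)) (lam' * π),
      HasDerivWithinAt H' (H'' ω) (Set.Icc (-(lam' * π)) (lam' * π)) ω)
    (hcont : ContinuousOn H'' (Set.Icc (-(lam' * π)) (lam' * π)))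
    (hend1 : H (lam' * π) = 0) (hend2 : H (-(lam' * π)) = 0)
    (C1 C2 : ℝ)
    (hC1 : ∀ ω ∈ Set.Icc (-(lam' * π)) (lam' * π), ‖H' ω‖ ≤ C1)
    (hC2 : ∀ ω ∈ Set.Icc (-(lam' * π)) (lam' * π), ‖H'' ω‖ ≤ C2) :
    (1 / Real.sqrt (2 * π)) *
        ∫ t : ℝ, (1 / (t ^ 2 + 1)) *
          ‖∫ ω in (-(lam' * π))..(lam' * π),
              ((t : ℂ) ^ 2) * H ω * Complex.exp (Complex.I * ω * t)‖
      ≤ Real.sqrt (2 * π) * (lam' * π * C2 + C1) := by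
  have hle : -(lam' * π) ≤ lam' * π := neg_le_self (by positivity)
  simpa [mul_right_comm] using weighted_integral_bound_high_general hle hd1 hd2 hend2 hend1
    (hC1 _ ⟨le_rfl, hle⟩) (hC1 _ ⟨hle, le_rfl⟩) hC2
end
end
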